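/- arXiv:2407.12596 — 4 statements merged into one kernel-verified Lean document; each statement's English description precedes it below -/
import Mathlib

section
/- Let p be a prime, r ∈ ℕ_{≥1}, R = ℤ/p^rℤ with maximal ideal I = pR, let n ≥ 4 be even, and let ε ∈ {1, -1} ⊆ R. Let ω_n be the number of ε-quiddity cycles of length n over R/I ≅ 𝔽_p, and let σ := |{(c₁,…,cₙ) ∈ Iⁿ : [c₁,…,cₙ] = (-1)^{n/2}·Id}|. Then the number of ε-quiddity cycles of length n over R equals: (ω_n − 1)·p^{(r-1)(n-3)} + σ if ε = (-1)^{n/2}; ω_n·p^{(r-1)(n-3)} if ε = −(-1)^{n/2} and p > 2; and (ω_n − 1)·p^{(r-1)(n-3)} if p = 2 and ε = −(-1)^{n/2} with ε ≠ (-1)^{n/2}. -/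
open Matrix

/-- `η(a)` is the matrix `![![a, -1], ![1, 0]]`. -/
def eta {R : Type*} [CommRing R] (a : R) : Matrix (Fin 2) (Fin 2) R := !![a, -1; 1, 0]

/-- `[c₁, …, cₙ] = η(c₁)·η(c₂)⋯η(cₙ)`. -/
def prodEta {R : Type*} [CommRing R] {n : ℕ} (c : Fin n → R) : Matrix (Fin 2) (Fin 2) R :=
  (List.ofFn fun i => eta (c i)).prod


/-!
Let `f : R → S` be the reduction modulo the maximal ideal. If the middle factor `u` is a unit, a
product `η(a) η(u) η(b)` determines `a`, `u`, `b`, and every matrix of determinant one whose lower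
right entry is a unit is such a product. Hence a cycle `q` over `S` whose entry `q 1` is nonzero has
exactly `|ker f| ^ (n - 3)` lifts to a cycle over `R`: all entries after the first three can be
lifted freely, and they determine the first three. Quiddity cycles may be rotated, so this count
holds for every nonzero `q`.

The zero tuple is a cycle exactly for `ε = (-1) ^ (n / 2)`. Its lifts have entries in `I`, and the
continuant recursion shows that the upper left entry of their product is `(-1) ^ (n / 2)` modulo
`I ^ 2`. For `R = ℤ/2^r` and `ε = -(-1) ^ (n / 2)` a lift would force `2 ∈ (4)`, that is `2 = 0`.
-/

/-- The set of `ε`-quiddity cycles of length `n` over `R`, whose cardinality is to be computed.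
The scalar `ε` may be any element of `R`. -/
def quiddityCycles {R : Type*} [CommRing R] (ε : R) (n : ℕ) : Set (Fin n → R) :=
  {c | prodEta c = ε • 1}

section EtaProducts

variable {R S : Type*} [CommRing R] [CommRing S] {n : ℕ}

theorem mem_quiddityCycles {ε : R} {c : Fin n → R} :
    c ∈ quiddityCycles ε n ↔ prodEta c = ε • 1 :=
  Iff.rfl

theorem prodEta_succ (c : Fin (n + 1) → R) :
    prodEta c = eta (c 0) * prodEta fun i => c i.succ := by
  simp [prodEta, List.ofFn_succ]

theorem prodEta_succ_last (c : Fin (n + 1) → R) :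
    prodEta c = prodEta (fun i => c i.castSucc) * eta (c (Fin.last n)) := by
  rw [prodEta, List.ofFn_succ_last, List.prod_append, List.prod_singleton, prodEta]

theorem prodEta_add_three (c : Fin (n + 3) → R) :
    prodEta c = eta (c 0) * eta (c 1) * eta (c 2) * prodEta fun i => c (i.addNat 3) := by
  rw [prodEta_succ, prodEta_succ, prodEta_succ, mul_assoc, mul_assoc]
  rfl

theorem prodEta_zero_of_even (hn : Even n) :
    prodEta (0 : Fin n → R) = ((-1 : R) ^ (n / 2)) • 1 := by
  obtain ⟨k, rfl⟩ := even_iff_exists_two_mul.mp hn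
  have eta_zero_sq : eta (0 : R) ^ 2 = (-1 : R) • 1 := by
    ext i j
    fin_cases i <;> fin_cases j <;> simp [eta, sq]
  simp only [prodEta, Pi.zero_apply, List.ofFn_const, List.prod_replicate, pow_mul, eta_zero_sq,
    smul_pow, one_pow, Nat.mul_div_cancel_left k two_pos]

theorem mapMatrix_eta (f : R →+* S) (a : R) : f.mapMatrix (eta a) = eta (f a) := by
  ext i j
  fin_cases i <;> fin_cases j <;> simp [eta]

theorem mapMatrix_smul_one {ι : Type*} [Fintype ι] [DecidableEq ι] (f : R →+* S) (a : R) :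
    f.mapMatrix (a • (1 : Matrix ι ι R)) = f a • 1 := by
  ext i j
  simp [one_apply, apply_ite f]

theorem mapMatrix_prodEta (f : R →+* S) (c : Fin n → R) :
    f.mapMatrix (prodEta c) = prodEta (f ∘ c) := by
  simp only [prodEta, map_list_prod, List.map_ofFn, Function.comp_def, mapMatrix_eta]

theorem det_eta (a : R) : (eta a).det = 1 := by
  simp [eta]

theorem det_prodEta (c : Fin n → R) : (prodEta c).det = 1 := by
  induction n with
  | zero => simp [prodEta]
  | succ n ih => rw [prodEta_succ, det_mul, ih, det_eta, one_mul]

theorem isUnit_eta (a : R) : IsUnit (eta a) :=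
  (isUnit_iff_isUnit_det _).mpr (det_eta a ▸ isUnit_one)

theorem isUnit_prodEta (c : Fin n → R) : IsUnit (prodEta c) :=
  (isUnit_iff_isUnit_det _).mpr (det_prodEta c ▸ isUnit_one)

theorem zero_mem_quiddityCycles_iff (hn : Even n) {ε : R} :
    0 ∈ quiddityCycles ε n ↔ ε = (-1) ^ (n / 2) := by
  rw [mem_quiddityCycles, prodEta_zero_of_even hn]
  refine ⟨fun h => ?_, fun h => by rw [h]⟩
  simpa using (congrFun₂ h 0 0).symm

theorem comp_mem_quiddityCycles (f : R →+* S) {ε : R} {c : Fin n → R}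
    (hc : c ∈ quiddityCycles ε n) : f ∘ c ∈ quiddityCycles (f ε) n := by
  rw [mem_quiddityCycles] at hc ⊢
  rw [← mapMatrix_prodEta, hc, mapMatrix_smul_one]

end EtaProducts

section Rotation

variable {R : Type*} [CommRing R] {n : ℕ} {ε : R} {c : Fin (n + 1) → R}

theorem rotate_one_mem_quiddityCycles (hc : c ∈ quiddityCycles ε (n + 1)) :
    (fun i => c (i + 1)) ∈ quiddityCycles ε (n + 1) := by
  rw [mem_quiddityCycles, prodEta_succ] at hc
  rw [mem_quiddityCycles, prodEta_succ_last]
  simp only [Fin.coeSucc_eq_succ, Fin.last_add_one]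
  refine (isUnit_eta (c 0)).mul_left_cancel ?_
  rw [← mul_assoc, hc, smul_one_mul, mul_smul_one]

theorem rotate_mem_quiddityCycles (hc : c ∈ quiddityCycles ε (n + 1)) (j : Fin (n + 1)) :
    (fun i => c (i + j)) ∈ quiddityCycles ε (n + 1) := by
  induction j using Fin.induction with
  | zero => simpa using hc
  | succ j ih =>
    simpa only [add_assoc, add_comm (1 : Fin (n + 1)), Fin.coeSucc_eq_succ]
      using rotate_one_mem_quiddityCycles ih

end Rotation

section TripleFactorization

variable {R : Type*} [CommRing R]

theorem eta_mul_eta_mul_eta (a u b : R) :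
    eta a * eta u * eta b = !![(a * u - 1) * b - a, 1 - a * u; u * b - 1, -u] := by
  ext i j
  fin_cases i <;> fin_cases j <;> simp [eta] <;> ring

theorem eq_of_eta_mul_eta_mul_eta_eq {a u b a' u' b' : R} (hu : IsUnit u)
    (h : eta a * eta u * eta b = eta a' * eta u' * eta b') : a = a' ∧ u = u' ∧ b = b' := by
  simp only [eta_mul_eta_mul_eta, ← Matrix.ext_iff, Fin.forall_fin_two, of_apply, cons_val_zero,
    cons_val_one, cons_val', cons_val_fin_one, neg_inj, sub_left_inj, sub_right_inj] at h
  obtain ⟨⟨-, hau⟩, hub, rfl⟩ := h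
  exact ⟨hu.mul_right_cancel hau, rfl, hu.mul_left_cancel hub⟩

theorem exists_eta_mul_eta_mul_eta_eq {A : Matrix (Fin 2) (Fin 2) R} (hdet : A.det = 1)
    (hunit : IsUnit (A 1 1)) : ∃ a u b, eta a * eta u * eta b = A := by
  obtain ⟨v, hv⟩ := hunit.exists_right_inv
  rw [det_fin_two] at hdet
  refine ⟨(A 0 1 - 1) * v, -A 1 1, -(A 1 0 + 1) * v, ?_⟩
  rw [eta_mul_eta_mul_eta]
  ext i j
  fin_cases i <;> fin_cases j <;> dsimp
  · linear_combination ((A 0 1 - 1) * (A 1 0 + 1) * v + A 0 0) * hv - v * hdet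
  · linear_combination (A 0 1 - 1) * hv
  · linear_combination (A 1 0 + 1) * hv
  · exact neg_neg _

end TripleFactorization

section Lifts

variable {R S : Type*} [CommRing R] [CommRing S] {f : R →+* S} {m : ℕ}

theorem ncard_lifts (hf : Function.Surjective f) (q : Fin m → S) :
    {c : Fin m → R | f ∘ c = q}.ncard = Nat.card (RingHom.ker f) ^ m := by
  have card_fiber (s : S) : Nat.card {x : R // f x = s} = Nat.card (RingHom.ker f) :=
    Nat.card_congr (AddMonoidHom.fiberEquivKerOfSurjective (f := f.toAddMonoidHom) hf s)
  have lifts_equiv : {c : Fin m → R // f ∘ c = q} ≃ ((i : Fin m) → {x : R // f x = q i}) :=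
    (Equiv.subtypeEquivRight fun _ => funext_iff).trans
      (Equiv.subtypePiEquivPi (p := fun i x => f x = q i))
  calc {c : Fin m → R | f ∘ c = q}.ncard
      = Nat.card ((i : Fin m) → {x : R // f x = q i}) := Nat.card_congr lifts_equiv
    _ = Nat.card (RingHom.ker f) ^ m := by simp [Nat.card_pi, card_fiber]

theorem injOn_drop_three {q : Fin (m + 3) → S} [IsLocalHom f] (hq : IsUnit (q 1))
    (T : Matrix (Fin 2) (Fin 2) R) :
    Set.InjOn (fun (c : Fin (m + 3) → R) (i : Fin m) => c (i.addNat 3))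
      {c | prodEta c = T ∧ f ∘ c = q} := by
  rintro c ⟨hcT, hcq⟩ c' ⟨hcT', -⟩ htail
  have hunit : IsUnit (c 1) := isUnit_of_map_unit f _ (by simpa [← hcq] using hq)
  have htriple : eta (c 0) * eta (c 1) * eta (c 2) = eta (c' 0) * eta (c' 1) * eta (c' 2) := by
    refine (isUnit_prodEta fun i : Fin m => c (i.addNat 3)).mul_right_cancel ?_
    rw [← prodEta_add_three, hcT, ← hcT', prodEta_add_three c']
    exact congrArg (_ * prodEta ·) htail.symm
  obtain ⟨h0, h1, h2⟩ := eq_of_eta_mul_eta_mul_eta_eq hunit htriple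
  funext i
  exact Fin.cases h0 (Fin.cases h1 (Fin.cases h2 (congrFun htail))) i

theorem surjOn_drop_three {q : Fin (m + 3) → S} [IsLocalHom f] (hq : IsUnit (q 1))
    {T : Matrix (Fin 2) (Fin 2) R} (hT : T.det = 1) (hTq : f.mapMatrix T = prodEta q) :
    Set.SurjOn (fun (c : Fin (m + 3) → R) (i : Fin m) => c (i.addNat 3))
      {c | prodEta c = T ∧ f ∘ c = q} {d | f ∘ d = fun i => q (i.addNat 3)} := by
  intro d hd
  obtain ⟨A, hAd⟩ : ∃ A, A * prodEta d = T := by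
    obtain ⟨B, hB⟩ := (isUnit_prodEta d).exists_left_inv
    exact ⟨T * B, by rw [mul_assoc, hB, mul_one]⟩
  have hAq : f.mapMatrix A = eta (q 0) * eta (q 1) * eta (q 2) := by
    refine (isUnit_prodEta (f ∘ d)).mul_right_cancel ?_
    rw [← mapMatrix_prodEta, ← map_mul, hAd, hTq, prodEta_add_three, mapMatrix_prodEta, hd]
  have hAdet : A.det = 1 := by
    rw [← hT, ← hAd, det_mul, det_prodEta, mul_one]
  have hAunit : IsUnit (A 1 1) := by
    have hA11 : f (A 1 1) = -q 1 := by
      simpa [eta_mul_eta_mul_eta] using congrFun₂ hAq 1 1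
    exact isUnit_of_map_unit f _ (hA11 ▸ hq.neg)
  obtain ⟨a, u, b, rfl⟩ := exists_eta_mul_eta_mul_eta_eq hAdet hAunit
  -- The factorization over `S` is unique too, so `a`, `u`, `b` lift `q 0`, `q 1`, `q 2`.
  have hq_eq_map : q 0 = f a ∧ q 1 = f u ∧ q 2 = f b := by
    refine eq_of_eta_mul_eta_mul_eta_eq hq ?_
    rw [← hAq, map_mul, map_mul, mapMatrix_eta, mapMatrix_eta, mapMatrix_eta]
  obtain ⟨ha, hu, hb⟩ := hq_eq_map
  refine ⟨vecCons a (vecCons u (vecCons b d)), ⟨?_, funext fun i => ?_⟩, rfl⟩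
  · rw [prodEta_add_three, ← hAd]
    rfl
  · exact Fin.cases ha.symm (Fin.cases hu.symm (Fin.cases hb.symm (congrFun hd))) i

theorem ncard_lifts_prodEta_eq (hf : Function.Surjective f) [IsLocalHom f]
    {q : Fin (m + 3) → S} (hq : IsUnit (q 1)) {T : Matrix (Fin 2) (Fin 2) R} (hT : T.det = 1)
    (hTq : f.mapMatrix T = prodEta q) :
    {c : Fin (m + 3) → R | prodEta c = T ∧ f ∘ c = q}.ncard =
      Nat.card (RingHom.ker f) ^ m := by
  have drop_three_mapsTo : Set.MapsTo (fun (c : Fin (m + 3) → R) (i : Fin m) => c (i.addNat 3))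
      {c | prodEta c = T ∧ f ∘ c = q} {d | f ∘ d = fun i => q (i.addNat 3)} :=
    fun c hc => funext fun i => congrFun hc.2 (i.addNat 3)
  rw [← ncard_lifts hf fun i => q (i.addNat 3),
    ← (surjOn_drop_three hq hT hTq).image_eq_of_mapsTo drop_three_mapsTo,
    (injOn_drop_three hq T).ncard_image]

theorem ncard_quiddityCycles_lifts_rotate {n : ℕ} (ε : R) (q : Fin (n + 1) → S)
    (j : Fin (n + 1)) :
    {c ∈ quiddityCycles ε (n + 1) | f ∘ c = fun i => q (i + j)}.ncard =
      {c ∈ quiddityCycles ε (n + 1) | f ∘ c = q}.ncard := by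
  refine (Set.ncard_congr (fun c _ i => c (i + j)) ?_ ?_ ?_).symm
  · rintro c ⟨hc, rfl⟩
    exact ⟨rotate_mem_quiddityCycles hc j, rfl⟩
  · intro c c' _ _ h
    funext i
    simpa using congrFun h (i - j)
  · rintro c ⟨hc, hcq⟩
    refine ⟨fun i => c (i - j), ⟨?_, ?_⟩, by simp⟩
    · simpa only [sub_eq_add_neg] using rotate_mem_quiddityCycles hc (-j)
    · funext i
      simpa using congrFun hcq (i - j)

theorem ncard_quiddityCycles_lifts (hf : Function.Surjective f) [IsLocalHom f] {ε : R}
    (hε : ε ^ 2 = 1) {q : Fin (m + 3) → S} (hq : q ∈ quiddityCycles (f ε) (m + 3))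
    {j : Fin (m + 3)} (hj : IsUnit (q j)) :
    {c ∈ quiddityCycles ε (m + 3) | f ∘ c = q}.ncard = Nat.card (RingHom.ker f) ^ m := by
  rw [← ncard_quiddityCycles_lifts_rotate ε q (j - 1)]
  refine ncard_lifts_prodEta_eq hf (by simpa using hj) (by simpa [det_fin_two, ← sq] using hε) ?_
  rw [mapMatrix_smul_one]
  exact (rotate_mem_quiddityCycles hq (j - 1)).symm

end Lifts

section Counting

theorem ncard_eq_mul_of_ncard_fiber_eq {α β : Type*} {s : Set α} {t : Set β} (hs : s.Finite)
    (ht : t.Finite) {g : α → β} (hg : Set.MapsTo g s t) {k : ℕ}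
    (hk : ∀ b ∈ t, {a ∈ s | g a = b}.ncard = k) : s.ncard = t.ncard * k := by
  classical
  lift s to Finset α using hs
  lift t to Finset β using ht
  rw [Set.ncard_coe_finset, Set.ncard_coe_finset, Finset.card_eq_sum_card_fiberwise hg]
  refine Finset.sum_const_nat fun b hb => ?_
  rw [← hk b hb, ← Set.ncard_coe_finset, Finset.coe_filter]
  rfl

variable {R S : Type*} [CommRing R] [CommRing S] [Finite R] {f : R →+* S} [IsLocalHom f] {ε : R}
  {n : ℕ}

theorem ncard_quiddityCycles_comp_ne_zero (hf : Function.Surjective f) (hS : IsField S)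
    (hε : ε ^ 2 = 1) (hn : 3 ≤ n) :
    {c ∈ quiddityCycles ε n | f ∘ c ≠ 0}.ncard =
      (quiddityCycles (f ε) n \ {0}).ncard * Nat.card (RingHom.ker f) ^ (n - 3) := by
  have : Finite S := Finite.of_surjective f hf
  obtain ⟨m, rfl⟩ := Nat.exists_eq_add_of_le' hn
  refine ncard_eq_mul_of_ncard_fiber_eq (Set.toFinite _) (Set.toFinite _) (g := (f ∘ ·))
    (fun _ hc => Set.mem_sdiff_singleton.mpr ⟨comp_mem_quiddityCycles f hc.1, hc.2⟩) ?_
  rintro q ⟨hq, hq0⟩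
  obtain ⟨j, hj⟩ := Function.ne_iff.mp hq0
  have hunit : IsUnit (q j) := .of_mul_eq_one _ (hS.mul_inv_cancel hj).choose_spec
  rw [Nat.add_sub_cancel, ← ncard_quiddityCycles_lifts hf hε hq hunit]
  congr 1
  ext c
  constructor
  · rintro ⟨⟨hc, -⟩, hcq⟩
    exact ⟨hc, hcq⟩
  · rintro ⟨hc, rfl⟩
    exact ⟨⟨hc, hq0⟩, rfl⟩

theorem ncard_quiddityCycles (hf : Function.Surjective f) (hS : IsField S)
    (hε : ε ^ 2 = 1) (hn : 3 ≤ n) :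
    (quiddityCycles ε n).ncard =
      (quiddityCycles (f ε) n \ {0}).ncard * Nat.card (RingHom.ker f) ^ (n - 3) +
        {c ∈ quiddityCycles ε n | f ∘ c = 0}.ncard := by
  rw [← ncard_quiddityCycles_comp_ne_zero hf hS hε hn, add_comm]
  exact (Set.ncard_inter_add_ncard_sdiff_eq_ncard _ {c | f ∘ c = 0}).symm

end Counting

section EntriesInIdeal

variable {R : Type*} [CommRing R] {I : Ideal R} {n : ℕ}

theorem prodEta_zero_zero_add_two (c : Fin (n + 2) → R) :
    prodEta c 0 0 = c 0 * prodEta (fun i => c i.succ) 0 0 -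
      prodEta (fun i => c i.succ.succ) 0 0 := by
  rw [prodEta_succ, prodEta_succ fun i => c i.succ]
  simp only [eta, mul_apply, Fin.sum_univ_two, of_apply, cons_val', cons_val_zero, cons_val_one,
    cons_val_fin_one]
  ring

theorem prodEta_zero_zero_mem_of_odd (hn : Odd n) {c : Fin n → R} (hc : ∀ i, c i ∈ I) :
    prodEta c 0 0 ∈ I := by
  obtain ⟨k, rfl⟩ := hn
  induction k with
  | zero => simpa [prodEta, eta] using hc 0
  | succ k ih =>
    rw [prodEta_zero_zero_add_two]
    exact sub_mem (I.mul_mem_right _ (hc 0)) (ih fun i => hc i.succ.succ)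

theorem prodEta_zero_zero_sub_mem_sq_of_even (hn : Even n) {c : Fin n → R} (hc : ∀ i, c i ∈ I) :
    prodEta c 0 0 - (-1) ^ (n / 2) ∈ I ^ 2 := by
  obtain ⟨k, rfl⟩ := even_iff_exists_two_mul.mp hn
  rw [Nat.mul_div_cancel_left k two_pos]
  induction k with
  | zero => simp [prodEta]
  | succ k ih =>
    have hodd : prodEta (fun i : Fin (2 * k + 1) => c i.succ) 0 0 ∈ I :=
      prodEta_zero_zero_mem_of_odd ⟨k, rfl⟩ fun i => hc i.succ
    have hprod : c 0 * prodEta (fun i : Fin (2 * k + 1) => c i.succ) 0 0 ∈ I ^ 2 :=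
      sq I ▸ Ideal.mul_mem_mul (hc 0) hodd
    rw [prodEta_zero_zero_add_two (n := 2 * k), pow_succ (-1 : R), mul_neg_one, sub_neg_eq_add,
      sub_add]
    exact sub_mem hprod (ih (even_two_mul k) fun i => hc i.succ.succ)

theorem sub_mem_sq_of_mem_quiddityCycles (hn : Even n) {ε : R} {c : Fin n → R}
    (hc : c ∈ quiddityCycles ε n) (hcI : ∀ i, c i ∈ I) : ε - (-1) ^ (n / 2) ∈ I ^ 2 := by
  have h := prodEta_zero_zero_sub_mem_sq_of_even hn hcI
  rw [mem_quiddityCycles.mp hc] at h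
  simpa using h

end EntriesInIdeal

theorem eq_zero_of_mem_span_singleton_sq {R : Type*} [CommRing R] [IsLocalRing R] {x : R}
    (hx : Ideal.span {x} ≠ ⊤) (h : x ∈ Ideal.span {x} ^ 2) : x = 0 := by
  rw [Ideal.span_singleton_pow, Ideal.mem_span_singleton] at h
  obtain ⟨a, ha⟩ := h
  rw [Ne, Ideal.span_singleton_eq_top] at hx
  have hunit : IsUnit (1 - x * a) :=
    (IsLocalRing.isUnit_or_isUnit_one_sub_self _).resolve_left (hx ∘ isUnit_of_mul_isUnit_left)
  refine hunit.mul_left_eq_zero.mp ?_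
  linear_combination ha

theorem neg_neg_one_pow_sub_mem_iff {R : Type*} [CommRing R] (J : Ideal R) (k : ℕ) :
    -(-1 : R) ^ k - (-1) ^ k ∈ J ↔ 2 ∈ J := by
  have h : -(-1 : R) ^ k - (-1) ^ k = (-1) ^ (k + 1) * 2 := by ring
  rw [h, Ideal.unit_mul_mem_iff_mem _ (isUnit_one.neg.pow _)]

section ZModPrimePow

theorem ker_castHom_eq_span_natCast {m n : ℕ} (h : m ∣ n) :
    RingHom.ker (ZMod.castHom h (ZMod m)) = Ideal.span {(m : ZMod n)} := by
  refine le_antisymm (fun x hx => ?_) ?_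
  · obtain ⟨k, rfl⟩ := ZMod.intCast_surjective x
    rw [RingHom.mem_ker, map_intCast, ZMod.intCast_zmod_eq_zero_iff_dvd] at hx
    obtain ⟨l, rfl⟩ := hx
    exact Ideal.mem_span_singleton.mpr ⟨l, by push_cast; rfl⟩
  · simp

theorem natCast_mem_span_natCast_iff {m n : ℕ} (h : m ∣ n) (k : ℕ) :
    (k : ZMod n) ∈ Ideal.span {(m : ZMod n)} ↔ m ∣ k := by
  rw [← ker_castHom_eq_span_natCast h, RingHom.mem_ker, map_natCast, ZMod.natCast_eq_zero_iff]

theorem card_span_natCast_mul {m n : ℕ} (h : m ∣ n) :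
    Nat.card (Ideal.span {(m : ZMod n)}) * m = n := by
  have hquot : Nat.card (ZMod n ⧸ Ideal.span {(m : ZMod n)}) = m := by
    rw [← ker_castHom_eq_span_natCast h, Nat.card_congr
      (RingHom.quotientKerEquivOfSurjective (ZMod.castHom_surjective h)).toEquiv, Nat.card_zmod]
  have hcard := Submodule.card_eq_card_quotient_mul_card (Ideal.span {(m : ZMod n)})
  rw [hquot, Nat.card_zmod] at hcard
  linarith

variable {p r : ℕ} [Fact p.Prime]

theorem two_mem_span_natCast_prime_iff {n : ℕ} (h : p ∣ n) :
    (2 : ZMod n) ∈ Ideal.span {(p : ZMod n)} ↔ p = 2 := by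
  rw [← Nat.prime_dvd_prime_iff_eq Fact.out Nat.prime_two, ← natCast_mem_span_natCast_iff h,
    Nat.cast_ofNat]

theorem isMaximal_span_natCast_prime {n : ℕ} (h : p ∣ n) :
    (Ideal.span {(p : ZMod n)}).IsMaximal :=
  ker_castHom_eq_span_natCast h ▸
    RingHom.ker_isMaximal_of_surjective _ (ZMod.castHom_surjective h)

theorem isLocalRing_zmod_prime_pow (hr : r ≠ 0) : IsLocalRing (ZMod (p ^ r)) := by
  have hmax : (Ideal.span {(p : ZMod (p ^ r))}).IsMaximal :=
    isMaximal_span_natCast_prime (dvd_pow_self p hr)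
  refine .of_unique_max_ideal ⟨_, hmax, fun M hM => (hmax.eq_of_le hM.ne_top ?_).symm⟩
  rw [Ideal.span_singleton_le_iff_mem]
  refine hM.isPrime.mem_of_pow_mem r ?_
  rw [← Nat.cast_pow, ZMod.natCast_self]
  exact M.zero_mem

theorem card_span_prime_zmod_prime_pow (hr : r ≠ 0) :
    Nat.card (Ideal.span {(p : ZMod (p ^ r))}) = p ^ (r - 1) := by
  have hp : 0 < p := (Fact.out : p.Prime).pos
  refine Nat.eq_of_mul_eq_mul_right hp ?_
  rw [card_span_natCast_mul (dvd_pow_self p hr), pow_sub_one_mul hr]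

end ZModPrimePow

theorem stmt1_general {R : Type*} [CommRing R] [IsLocalRing R] [Finite R] (I : Ideal R)
    [I.IsMaximal] {n : ℕ} (hn : 3 ≤ n) (hne : Even n) {ε : R} (hε : ε ^ 2 = 1) :
    (ε - (-1) ^ (n / 2) ∈ I →
      (quiddityCycles ε n).ncard =
        ((quiddityCycles (Ideal.Quotient.mk I ε) n).ncard - 1) * Nat.card I ^ (n - 3) +
          {c : Fin n → R | (∀ i, c i ∈ I) ∧ prodEta c = ε • 1}.ncard) ∧
    (ε - (-1) ^ (n / 2) ∉ I →
      (quiddityCycles ε n).ncard =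
        (quiddityCycles (Ideal.Quotient.mk I ε) n).ncard * Nat.card I ^ (n - 3)) ∧
    (ε - (-1) ^ (n / 2) ∈ I → ε - (-1) ^ (n / 2) ∉ I ^ 2 →
      (quiddityCycles ε n).ncard =
        ((quiddityCycles (Ideal.Quotient.mk I ε) n).ncard - 1) * Nat.card I ^ (n - 3)) := by
  have hloc : IsLocalHom (Ideal.Quotient.mk I) := .of_surjective _ Ideal.Quotient.mk_surjective
  have hfield : IsField (R ⧸ I) :=
    (Ideal.Quotient.maximal_ideal_iff_isField_quotient I).mp inferInstance
  have hcount := ncard_quiddityCycles Ideal.Quotient.mk_surjective hfield hε hn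
  have hlift_zero : {c ∈ quiddityCycles ε n | Ideal.Quotient.mk I ∘ c = 0} =
      {c : Fin n → R | (∀ i, c i ∈ I) ∧ prodEta c = ε • 1} := by
    ext c
    simp [mem_quiddityCycles, funext_iff, Ideal.Quotient.eq_zero_iff_mem, and_comm]
  have hzero : 0 ∈ quiddityCycles (Ideal.Quotient.mk I ε) n ↔ ε - (-1) ^ (n / 2) ∈ I := by
    rw [zero_mem_quiddityCycles_iff hne, ← Ideal.Quotient.eq, map_pow, map_neg, map_one]
  have hlift_empty (h : ε - (-1) ^ (n / 2) ∉ I ^ 2) :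
      {c : Fin n → R | (∀ i, c i ∈ I) ∧ prodEta c = ε • 1} = ∅ :=
    Set.eq_empty_of_forall_notMem fun c hc => h (sub_mem_sq_of_mem_quiddityCycles hne hc.2 hc.1)
  rw [Ideal.mk_ker, hlift_zero] at hcount
  refine ⟨fun hI => ?_, fun hI => ?_, fun hI hI2 => ?_⟩
  · rw [hcount, Set.ncard_sdiff_singleton_of_mem (hzero.mpr hI)]
  · rw [hcount, Set.sdiff_singleton_eq_self (mt hzero.mp hI),
      hlift_empty (mt (Ideal.pow_le_self two_ne_zero ·) hI), Set.ncard_empty, add_zero]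
  · rw [hcount, Set.ncard_sdiff_singleton_of_mem (hzero.mpr hI), hlift_empty hI2,
      Set.ncard_empty, add_zero]

/-- For `R = ℤ/p^rℤ` with maximal ideal `I = pR`, `n ≥ 4` even,
`ε ∈ {1, -1}`, `ω_n` the number of `ε`-quiddity cycles over `R/I` and
`σ` the number of tuples in `Iⁿ` with product `(-1)^(n/2)·Id`, the number of
`ε`-quiddity cycles of length `n` over `R` is as prescribed in the three cases. -/
theorem stmt1 (p r : ℕ) (hp : p.Prime) (hr : 1 ≤ r) (n : ℕ) (hn : 4 ≤ n) (hne : Even n)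
    (ε : ZMod (p ^ r)) (hε : ε = 1 ∨ ε = -1) :
    (ε = (-1) ^ (n / 2) →
      Nat.card {c : Fin n → ZMod (p ^ r) // prodEta c = ε • 1} =
        (Nat.card {c : Fin n → (ZMod (p ^ r) ⧸ Ideal.span {(p : ZMod (p ^ r))}) //
            prodEta c = (Ideal.Quotient.mk (Ideal.span {(p : ZMod (p ^ r))}) ε) • 1} - 1) *
          p ^ ((r - 1) * (n - 3)) +
        Nat.card {c : Fin n → ZMod (p ^ r) //
            (∀ i, c i ∈ Ideal.span {(p : ZMod (p ^ r))}) ∧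
            prodEta c = ((-1 : ZMod (p ^ r)) ^ (n / 2)) • 1}) ∧
    (ε = -(-1) ^ (n / 2) → 2 < p →
      Nat.card {c : Fin n → ZMod (p ^ r) // prodEta c = ε • 1} =
        Nat.card {c : Fin n → (ZMod (p ^ r) ⧸ Ideal.span {(p : ZMod (p ^ r))}) //
            prodEta c = (Ideal.Quotient.mk (Ideal.span {(p : ZMod (p ^ r))}) ε) • 1} *
          p ^ ((r - 1) * (n - 3))) ∧
    (p = 2 → ε = -(-1) ^ (n / 2) → ε ≠ (-1) ^ (n / 2) →
      Nat.card {c : Fin n → ZMod (p ^ r) // prodEta c = ε • 1} =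
        (Nat.card {c : Fin n → (ZMod (p ^ r) ⧸ Ideal.span {(p : ZMod (p ^ r))}) //
            prodEta c = (Ideal.Quotient.mk (Ideal.span {(p : ZMod (p ^ r))}) ε) • 1} - 1) *
          p ^ ((r - 1) * (n - 3))) := by
  have : Fact p.Prime := ⟨hp⟩
  have hr0 : r ≠ 0 := Nat.one_le_iff_ne_zero.mp hr
  have hdvd : p ∣ p ^ r := dvd_pow_self p hr0
  have hlocal : IsLocalRing (ZMod (p ^ r)) := isLocalRing_zmod_prime_pow hr0
  have hmax : (Ideal.span {(p : ZMod (p ^ r))}).IsMaximal := isMaximal_span_natCast_prime hdvd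
  have hε_sq : ε ^ 2 = 1 := by rcases hε with rfl | rfl <;> simp
  rw [pow_mul, ← card_span_prime_zmod_prime_pow hr0]
  obtain ⟨hmem, hnotMem, hnotMemSq⟩ :=
    stmt1_general (Ideal.span {(p : ZMod (p ^ r))}) (by omega) hne hε_sq
  refine ⟨?_, ?_, ?_⟩
  · rintro rfl
    exact hmem (by simp)
  · rintro rfl hp2
    refine hnotMem ?_
    rw [neg_neg_one_pow_sub_mem_iff, two_mem_span_natCast_prime_iff hdvd]
    exact hp2.ne'
  · rintro rfl rfl hεne
    rw [neg_neg_one_pow_sub_mem_iff, neg_neg_one_pow_sub_mem_iff] at hnotMemSq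
    refine hnotMemSq ((two_mem_span_natCast_prime_iff hdvd).mpr rfl) fun h => hεne ?_
    have htwo : (2 : ZMod (2 ^ r)) = 0 :=
      mod_cast eq_zero_of_mem_span_singleton_sq hmax.ne_top (mod_cast h)
    linear_combination -(-1) ^ (n / 2) * htwo
end

section
/- Let n ≥ 4 with n ≡ 0 (mod 4), let p > 2 be a prime, and r ∈ ℕ_{≥1}. Then the number of tuples (c₁, …, cₙ) ∈ (ℤ/p^rℤ)ⁿ with [c₁, …, cₙ] = −Id equals p^{(n-3)(r-1)} · (p^{(n-2)/2} − 1) · [n/4]_{p²}, where [m]_q := (q^m − 1)/(q − 1). -/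
open Matrix

/-- The q-integer `[m]_q = 1 + q + ⋯ + q^(m-1) = (q^m - 1)/(q - 1)`. -/
def qInt (m q : ℕ) : ℕ := ∑ i ∈ Finset.range m, q ^ i

/-! A matrix of determinant one whose lower right entry is a unit is a product `η(a)η(b)η(d)` in
exactly one way, and that entry is then `-b`.

Over a field with `q` elements, let `N(n, ε)` be the number of solutions of `[c₁, …, cₙ] = ε • Id`
with `ε = ±1`, and `U(n)` the number of `n`-tuples whose continuant, the upper left entry of
`[c₁, …, cₙ]`, is nonzero. A solution of length `n + 3` with `c₂ ≠ 0` is determined by its last `n`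
entries, which can be any tuple with nonzero continuant; a solution with `c₂ = 0` is shortened by
`η(a)η(0)η(d) = -η(a + d)`. Hence `N(n + 3, ε) = U(n) + q N(n + 1, -ε)`. Moreover
`U(n + 1) + U(n) = q ^ (n + 1)`, because the first entry of a tuple with zero continuant is
determined by the others. In odd characteristic `N(2, 1) = 0`, and so
`(q ^ 2 - 1) N(2m + 2, (-1) ^ m) = (q ^ (m + 1) - 1) (q ^ m - 1)`.

Let `R → F` be a surjective local homomorphism. A solution over `F` that is not the zero tuple can
be rotated so that `c₂ ≠ 0`; then its last `n - 3` entries lift freely and determine the lifts of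
the first three, so it has `|ker| ^ (n - 3)` lifts. The zero tuple of length `2m + 2` has product
`(-1) ^ (m + 1) • Id`, so it is not among the solutions counted above. -/

section Counting

variable {α β : Type*}

theorem card_subtype_eq_of_existsUnique {P : α → Prop} {Q : β → Prop} (g : α → β)
    (maps : ∀ a, P a → Q (g a)) (lift : ∀ b, Q b → ∃! a, P a ∧ g a = b) :
    Nat.card {a // P a} = Nat.card {b // Q b} := by
  refine Nat.card_eq_of_bijective (fun a => ⟨g a, maps a a.2⟩) ⟨fun a a' h => ?_, fun b => ?_⟩
  · have hg : g a = g a' := congrArg Subtype.val h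
    exact Subtype.ext ((lift _ (maps a' a'.2)).unique ⟨a.2, hg⟩ ⟨a'.2, rfl⟩)
  · obtain ⟨a, ⟨ha, hab⟩, -⟩ := lift b b.2
    exact ⟨⟨a, ha⟩, Subtype.ext hab⟩

theorem card_subtype_eq_add [Finite α] (P Q : α → Prop) :
    Nat.card {a // P a} = Nat.card {a // P a ∧ Q a} + Nat.card {a // P a ∧ ¬ Q a} := by
  classical
  rw [← Nat.card_congr (Equiv.subtypeSubtypeEquivSubtypeInter P Q),
    ← Nat.card_congr (Equiv.subtypeSubtypeEquivSubtypeInter P fun a => ¬ Q a), ← Nat.card_sum]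
  exact Nat.card_congr (Equiv.sumCompl fun a : {a // P a} => Q a).symm

theorem card_eq_card_mul_of_card_fiber_eq [Finite α] [Finite β] (g : α → β) {k : ℕ}
    (hk : ∀ b, Nat.card {a // g a = b} = k) : Nat.card α = Nat.card β * k := by
  have := Fintype.ofFinite β
  rw [← Nat.card_congr (Equiv.sigmaFiberEquiv g), Nat.card_sigma, Finset.sum_congr rfl
    fun b _ => hk b, Finset.sum_const, Finset.card_univ, Nat.card_eq_fintype_card, smul_eq_mul]

variable {R S : Type*} [Ring R] [Ring S] {f : R →+* S}

theorem card_fiber_eq_card_ker (hf : Function.Surjective f) (y : S) :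
    Nat.card {x // f x = y} = Nat.card (RingHom.ker f) :=
  Nat.card_congr (AddMonoidHom.fiberEquivKerOfSurjective (f := (f : R →+ S)) hf y)

theorem card_comp_eq (hf : Function.Surjective f) {ι : Type*} [Fintype ι] (d : ι → S) :
    Nat.card {c : ι → R // f ∘ c = d} = Nat.card (RingHom.ker f) ^ Fintype.card ι := by
  have e : {c : ι → R // f ∘ c = d} ≃ ∀ i, {x // f x = d i} :=
    (Equiv.subtypeEquivRight fun c => funext_iff).trans
      (Equiv.subtypePiEquivPi (p := fun i x => f x = d i))
  rw [Nat.card_congr e, Nat.card_pi]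
  simp only [card_fiber_eq_card_ker hf, Finset.prod_const, Finset.card_univ]

end Counting

section ProdEta

variable {R S : Type*} [CommRing R] [CommRing S] {n : ℕ}

theorem prodEta_append {m : ℕ} (s : Fin m → R) (t : Fin n → R) :
    prodEta (Fin.append s t) = prodEta s * prodEta t := by
  have h := congrArg List.prod (congrArg (List.map eta) (List.ofFn_fin_append s t))
  simpa only [List.map_append, List.map_ofFn, List.prod_append] using! h

theorem prodEta_cons (a : R) (t : Fin n → R) :
    prodEta (Fin.cons a t : Fin (n + 1) → R) = eta a * prodEta t := by
  simp [prodEta, List.ofFn_succ]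

theorem prodEta_snoc (t : Fin n → R) (a : R) :
    prodEta (Fin.snoc t a : Fin (n + 1) → R) = prodEta t * eta a := by
  rw [prodEta, List.ofFn_succ_last]
  simp [prodEta]

theorem prodEta_fin_three (s : Fin 3 → R) :
    prodEta s = !![s 0 * (s 1 * s 2 - 1) - s 2, 1 - s 0 * s 1; s 1 * s 2 - 1, -s 1] := by
  ext i j
  fin_cases i <;> fin_cases j <;> simp [prodEta, eta, List.ofFn_succ] <;> ring

theorem prodEta_comp (f : R →+* S) (c : Fin n → R) :
    prodEta (f ∘ c) = f.mapMatrix (prodEta c) := by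
  have h (a : R) : f.mapMatrix (eta a) = eta (f a) := by
    ext i j
    fin_cases i <;> fin_cases j <;> simp [eta]
  simp [prodEta, map_list_prod, Function.comp_def, h, -RingHom.mapMatrix_apply]

theorem det_units_smul_one (ε : ℤˣ) : (ε • (1 : Matrix (Fin 2) (Fin 2) R)).det = 1 := by
  rcases Int.units_eq_one_or ε with rfl | rfl <;> simp [det_fin_two]

theorem mapMatrix_units_smul_one (f : R →+* S) (ε : ℤˣ) :
    f.mapMatrix (ε • (1 : Matrix (Fin 2) (Fin 2) R)) = ε • 1 := by
  rw [Units.smul_def, map_zsmul, map_one, ← Units.smul_def]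

theorem prodEta_zero (m : ℕ) : prodEta (0 : Fin (2 * m) → R) = (-1 : ℤˣ) ^ m • 1 := by
  have h : eta (0 : R) ^ 2 = -1 := by
    ext i j
    fin_cases i <;> fin_cases j <;> simp [eta, sq]
  simp only [prodEta, Pi.zero_apply]
  rw [List.ofFn_const, List.prod_replicate, pow_mul, h]
  rcases Nat.even_or_odd m with hm | hm <;> simp [hm.neg_one_pow]

theorem mul_eq_iff_eq_mul_adjugate {A M E : Matrix (Fin 2) (Fin 2) R} (hM : M.det = 1) :
    A * M = E ↔ A = E * M.adjugate := by
  constructor <;> rintro rfl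
  · rw [mul_assoc, mul_adjugate, hM, one_smul, mul_one]
  · rw [mul_assoc, adjugate_mul, hM, one_smul, mul_one]

theorem mul_eq_units_smul_one_comm {A B : Matrix (Fin 2) (Fin 2) R} {ε : ℤˣ} :
    A * B = ε • 1 ↔ B * A = ε • 1 := by
  rw [← inv_smul_eq_iff, ← inv_smul_eq_iff, ← smul_mul_assoc, mul_eq_one_comm, mul_smul_comm]

theorem prodEta_comp_add_one_eq_iff (c : Fin (n + 1) → R) {ε : ℤˣ} :
    prodEta (fun i => c (i + 1)) = ε • 1 ↔ prodEta c = ε • 1 := by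
  have h : (fun i => c (i + 1)) = Fin.snoc (Fin.tail c) (c 0) := by
    ext i
    induction i using Fin.lastCases with
    | last => simp
    | cast i => simp [Fin.tail]
  rw [h, prodEta_snoc, mul_eq_units_smul_one_comm, ← prodEta_cons, Fin.cons_self_tail]

theorem prodEta_comp_add_right_eq_iff [NeZero n] (c : Fin n → R) (k : Fin n) {ε : ℤˣ} :
    prodEta (fun i => c (i + k)) = ε • 1 ↔ prodEta c = ε • 1 := by
  obtain ⟨n, rfl⟩ := Nat.exists_eq_succ_of_ne_zero (NeZero.ne n)
  induction k using Fin.induction with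
  | zero => simp
  | succ k ih =>
    have h (i : Fin (n + 1)) : i + 1 + k.castSucc = i + k.succ := by
      rw [add_right_comm, add_assoc, Fin.coeSucc_eq_succ]
    rw [← ih, ← prodEta_comp_add_one_eq_iff fun i => c (i + k.castSucc)]
    simp only [h]

theorem existsUnique_prodEta_fin_three_eq {G : Matrix (Fin 2) (Fin 2) R} (hG : G.det = 1)
    (hu : IsUnit (G 1 1)) : ∃! s : Fin 3 → R, prodEta s = G := by
  obtain ⟨v, hv⟩ := hu.exists_right_inv
  rw [det_fin_two] at hG
  refine ⟨![v * (G 0 1 - 1), -G 1 1, -v * (G 1 0 + 1)], ?_, fun s hs => ?_⟩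
  · simp only [prodEta_fin_three]
    ext i j
    fin_cases i <;> fin_cases j <;> simp <;> grind
  · simp only [prodEta_fin_three] at hs
    have h01 : 1 - s 0 * s 1 = G 0 1 := congrFun₂ hs 0 1
    have h10 : s 1 * s 2 - 1 = G 1 0 := congrFun₂ hs 1 0
    have h11 : -s 1 = G 1 1 := congrFun₂ hs 1 1
    ext i
    fin_cases i <;> simp <;> grind

theorem prodEta_mul_adjugate_prodEta_natAdd {m : ℕ} (c : Fin (m + n) → R) :
    prodEta c * (prodEta fun i => c (Fin.natAdd m i)).adjugate =
      prodEta fun i => c (Fin.castAdd n i) := by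
  rw [eq_comm, ← mul_eq_iff_eq_mul_adjugate (det_prodEta _), ← prodEta_append,
    Fin.append_castAdd_natAdd]

theorem prodEta_mul_adjugate_prodEta_natAdd_one_one (c : Fin (3 + n) → R) :
    (prodEta c * (prodEta fun i => c (Fin.natAdd 3 i)).adjugate) 1 1 = -c (Fin.castAdd n 1) := by
  rw [prodEta_mul_adjugate_prodEta_natAdd, prodEta_fin_three]
  rfl

theorem eq_of_prodEta_eq_of_isUnit {c d : Fin (3 + n) → R} (h : prodEta c = prodEta d)
    (htail : ∀ i : Fin n, c (Fin.natAdd 3 i) = d (Fin.natAdd 3 i))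
    (hu : IsUnit (c (Fin.castAdd n 1))) : c = d := by
  have hhead : (fun i => c (Fin.castAdd n i)) = fun i => d (Fin.castAdd n i) := by
    refine (existsUnique_prodEta_fin_three_eq (det_prodEta _) ?_).unique rfl ?_
    · simpa [prodEta_fin_three] using hu
    · simp only [← prodEta_mul_adjugate_prodEta_natAdd, h, htail]
  rw [← Fin.append_castAdd_natAdd (f := c), hhead, funext htail, Fin.append_castAdd_natAdd]

theorem card_prodEta_eq_and_of_isUnit {E : Matrix (Fin 2) (Fin 2) R} (hE : E.det = 1)
    (Q : (Fin n → R) → Prop) (hQ : ∀ t, Q t → IsUnit ((E * (prodEta t).adjugate) 1 1)) :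
    Nat.card {c : Fin (3 + n) → R // prodEta c = E ∧ Q fun i => c (Fin.natAdd 3 i)} =
      Nat.card {t // Q t} := by
  refine card_subtype_eq_of_existsUnique (fun c i => c (Fin.natAdd 3 i)) (fun c hc => hc.2)
    fun t ht => ?_
  have hdet : (E * (prodEta t).adjugate).det = 1 := by
    rw [det_mul, hE, det_adjugate, det_prodEta, one_pow, mul_one]
  obtain ⟨s, hs, -⟩ := existsUnique_prodEta_fin_three_eq hdet (hQ t ht)
  have hst : prodEta (Fin.append s t) = E := by
    rwa [prodEta_append, mul_eq_iff_eq_mul_adjugate (det_prodEta t)]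
  refine ⟨Fin.append s t, by simp [hst, ht], fun c ⟨⟨hc, _⟩, hct⟩ => ?_⟩
  refine eq_of_prodEta_eq_of_isUnit (hc.trans hst.symm) (by simp [← hct]) ?_
  rw [← IsUnit.neg_iff, ← prodEta_mul_adjugate_prodEta_natAdd_one_one, hc, hct]
  exact hQ t ht

theorem prodEta_cons_zero_zero (a : R) (t : Fin n → R) :
    prodEta (Fin.cons a t : Fin (n + 1) → R) 0 0 = a * prodEta t 0 0 - prodEta t 1 0 := by
  simp [prodEta_cons, eta, mul_apply, sub_eq_add_neg]

theorem prodEta_eq_neg_of_eq_zero (c : Fin (3 + n) → R) (h : c (Fin.castAdd n 1) = 0) :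
    prodEta c = -prodEta (Fin.append ![c (Fin.castAdd n 0) + c (Fin.castAdd n 2)]
      fun i => c (Fin.natAdd 3 i)) := by
  have hhead : (prodEta fun i => c (Fin.castAdd n i)) =
      -prodEta ![c (Fin.castAdd n 0) + c (Fin.castAdd n 2)] := by
    rw [prodEta_fin_three]
    ext i j
    fin_cases i <;> fin_cases j <;> simp [prodEta, eta, h]
    ring
  rw [prodEta_append, ← neg_mul, ← hhead, ← prodEta_append, Fin.append_castAdd_natAdd]

end ProdEta

/-- The number of `n`-tuples `c` over `R` with `[c₁, …, cₙ] = ε • Id`. The sign is an element of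
`ℤˣ` so that the same `ε` makes sense over every ring. -/
noncomputable def solutionCount (R : Type*) [CommRing R] (n : ℕ) (ε : ℤˣ) : ℕ :=
  Nat.card {c : Fin n → R // prodEta c = ε • 1}

/-- The number of `n`-tuples over `R` with nonzero continuant, the continuant of `c` being the upper
left entry of `[c₁, …, cₙ]`. -/
noncomputable def nonzeroContinuantCount (R : Type*) [CommRing R] (n : ℕ) : ℕ :=
  Nat.card {c : Fin n → R // prodEta c 0 0 ≠ 0}

theorem card_prodEta_eq_and_eq_zero {R : Type*} [CommRing R] (n : ℕ) (ε : ℤˣ) :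
    Nat.card {c : Fin (3 + n) → R // prodEta c = ε • 1 ∧ c (Fin.castAdd n 1) = 0} =
      Nat.card R * solutionCount R (1 + n) (-ε) := by
  rw [solutionCount, mul_comm, ← Nat.card_prod,
    ← Nat.card_congr (Equiv.prodSubtypeFstEquivSubtypeProd (β := R))]
  refine card_subtype_eq_of_existsUnique (fun c => (Fin.append
    ![c (Fin.castAdd n 0) + c (Fin.castAdd n 2)] fun i => c (Fin.natAdd 3 i), c (Fin.castAdd n 0)))
    (fun c ⟨hc, h0⟩ => ?_) fun ⟨d, a⟩ hd => ?_
  · rw [Units.neg_smul, ← hc, prodEta_eq_neg_of_eq_zero c h0, neg_neg]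
  · have happ : (Fin.append ![d (Fin.castAdd n 0)] fun i => d (Fin.natAdd 1 i)) = d := by
      conv_rhs => rw [← Fin.append_castAdd_natAdd (f := d)]
      congr
      ext i
      fin_cases i
      rfl
    refine ⟨Fin.append ![a, 0, d (Fin.castAdd n 0) - a] fun i => d (Fin.natAdd 1 i),
      ⟨⟨?_, by simp⟩, ?_⟩, fun c ⟨⟨_, h0⟩, hc⟩ => ?_⟩
    · rw [prodEta_eq_neg_of_eq_zero _ (by simp)]
      simp [happ, hd]
    · simp [happ]
    · simp only [Prod.mk.injEq] at hc
      obtain ⟨rfl, rfl⟩ := hc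
      rw [← Fin.append_castAdd_natAdd (f := c)]
      congr 1
      · ext i
        fin_cases i <;> simp [h0]
      · simp

section Field

variable {F : Type*} [Field F]

theorem card_continuant_eq_zero (n : ℕ) :
    Nat.card {c : Fin (n + 1) → F // prodEta c 0 0 = 0} = nonzeroContinuantCount F n := by
  refine card_subtype_eq_of_existsUnique Fin.tail (fun c hc h0 => ?_) fun t ht =>
    ⟨Fin.cons (prodEta t 1 0 / prodEta t 0 0) t, ?_, fun c ⟨hc, hct⟩ => ?_⟩
  · rw [← Fin.cons_self_tail c, prodEta_cons_zero_zero, h0, mul_zero, zero_sub, neg_eq_zero] at hc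
    have hdet := det_prodEta (Fin.tail c)
    simp [det_fin_two, h0, hc] at hdet
  · simp [prodEta_cons_zero_zero, ht]
  · subst hct
    rw [← Fin.cons_self_tail c, prodEta_cons_zero_zero, sub_eq_zero, ← eq_div_iff ht] at hc
    rw [← hc, Fin.cons_self_tail]

theorem nonzeroContinuantCount_zero : nonzeroContinuantCount F 0 = 1 := by
  simp [nonzeroContinuantCount, prodEta]

theorem nonzeroContinuantCount_succ_add [Finite F] (n : ℕ) :
    nonzeroContinuantCount F (n + 1) + nonzeroContinuantCount F n = Nat.card F ^ (n + 1) := by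
  have h := card_subtype_eq_add (fun _ : Fin (n + 1) → F => True) fun c => prodEta c 0 0 = 0
  simp only [true_and] at h
  rw [card_continuant_eq_zero, Nat.card_congr (Equiv.subtypeUnivEquiv fun _ => trivial),
    Nat.card_fun, Nat.card_fin] at h
  rw [h, add_comm]
  rfl

theorem card_add_one_mul_nonzeroContinuantCount [Finite F] (n : ℕ) :
    ((Nat.card F : ℤ) + 1) * nonzeroContinuantCount F n =
      (Nat.card F : ℤ) ^ (n + 1) + (-1) ^ n := by
  induction n with
  | zero => simp [nonzeroContinuantCount_zero]
  | succ n ih =>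
    have h := nonzeroContinuantCount_succ_add (F := F) n
    zify at h
    linear_combination ((Nat.card F : ℤ) + 1) * h - ih

theorem card_prodEta_eq_and_ne_zero (n : ℕ) (ε : ℤˣ) :
    Nat.card {c : Fin (3 + n) → F // prodEta c = ε • 1 ∧ c (Fin.castAdd n 1) ≠ 0} =
      nonzeroContinuantCount F n := by
  have hentry (t : Fin n → F) :
      IsUnit (((ε • 1 : Matrix (Fin 2) (Fin 2) F) * (prodEta t).adjugate) 1 1) ↔
        prodEta t 0 0 ≠ 0 := by
    simp [adjugate_fin_two, isUnit_iff_ne_zero, smul_eq_zero_iff_eq]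
  rw [nonzeroContinuantCount,
    ← card_prodEta_eq_and_of_isUnit (det_units_smul_one ε) _ fun t => (hentry t).2]
  refine Nat.card_congr (Equiv.subtypeEquivRight fun c => and_congr_right fun hc => ?_)
  rw [← hentry, ← hc, prodEta_mul_adjugate_prodEta_natAdd_one_one, IsUnit.neg_iff,
    isUnit_iff_ne_zero]

theorem solutionCount_three_add [Finite F] (n : ℕ) (ε : ℤˣ) :
    solutionCount F (3 + n) ε =
      nonzeroContinuantCount F n + Nat.card F * solutionCount F (1 + n) (-ε) := by
  rw [solutionCount, card_subtype_eq_add _ fun c => c (Fin.castAdd n 1) = 0,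
    card_prodEta_eq_and_eq_zero, card_prodEta_eq_and_ne_zero, add_comm]

theorem solutionCount_two_one (h2 : (2 : F) ≠ 0) : solutionCount F 2 1 = 0 := by
  have hne (c : Fin 2 → F) : prodEta c ≠ (1 : ℤˣ) • 1 := fun h => by
    have h11 : (-1 : F) = 1 := by simpa [prodEta, eta] using congrFun₂ h 1 1
    exact h2 (by linear_combination -h11)
  have : IsEmpty {c : Fin 2 → F // prodEta c = (1 : ℤˣ) • 1} := ⟨fun c => hne c c.2⟩
  exact Nat.card_of_isEmpty

theorem card_sq_sub_one_mul_solutionCount [Finite F] (h2 : (2 : F) ≠ 0) (m : ℕ) :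
    ((Nat.card F : ℤ) ^ 2 - 1) * solutionCount F (2 * m + 2) ((-1) ^ m) =
      ((Nat.card F : ℤ) ^ (m + 1) - 1) * ((Nat.card F : ℤ) ^ m - 1) := by
  induction m with
  | zero => simp [solutionCount_two_one h2]
  | succ m ih =>
    have hrec := solutionCount_three_add (F := F) (2 * m + 1) ((-1) ^ (m + 1))
    have hU := card_add_one_mul_nonzeroContinuantCount (F := F) (2 * m + 1)
    rw [pow_succ (-1 : ℤˣ), mul_neg_one, neg_neg, show 3 + (2 * m + 1) = 2 * (m + 1) + 2 by ring,
      show 1 + (2 * m + 1) = 2 * m + 2 by ring] at hrec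
    rw [(odd_two_mul_add_one m).neg_one_pow] at hU
    rw [pow_succ (-1 : ℤˣ), mul_neg_one, hrec]
    push_cast
    linear_combination ((Nat.card F : ℤ) - 1) * hU + Nat.card F * ih

theorem exists_ne_zero_of_prodEta_eq (h2 : (2 : F) ≠ 0) {m : ℕ} {c : Fin (2 * m) → F}
    (hc : prodEta c = (-1 : ℤˣ) ^ (m + 1) • 1) : ∃ i, c i ≠ 0 := by
  by_contra! h
  obtain rfl : c = 0 := funext h
  rw [prodEta_zero, pow_succ, mul_smul, smul_left_cancel_iff] at hc
  have h00 : (1 : F) = -1 := by simpa using congrFun₂ hc 0 0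
  exact h2 (by linear_combination h00)

end Field

section Lifting

variable {R S : Type*} [CommRing R] [CommRing S] {f : R →+* S} {n : ℕ}

theorem card_lifts_comp_add_right [NeZero n] (f : R →+* S) (ε : ℤˣ) (d : Fin n → S) (k : Fin n) :
    Nat.card {c : Fin n → R // prodEta c = ε • 1 ∧ f ∘ c = fun i => d (i + k)} =
      Nat.card {c : Fin n → R // prodEta c = ε • 1 ∧ f ∘ c = d} := by
  refine (Nat.card_congr (Equiv.subtypeEquiv
    ((Equiv.addRight k).symm.arrowCongr (Equiv.refl R)) fun c => ?_)).symm
  refine and_congr (prodEta_comp_add_right_eq_iff c k).symm ?_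
  exact ((Equiv.addRight k).surjective.injective_comp_right.eq_iff (a := f ∘ c) (b := d)).symm

variable [IsLocalHom f]

theorem card_lifts_of_isUnit_one (hf : Function.Surjective f) {E : Matrix (Fin 2) (Fin 2) R}
    (hE : E.det = 1) {d : Fin (3 + n) → S} (hd : prodEta d = f.mapMatrix E)
    (hu : IsUnit (d (Fin.castAdd n 1))) :
    Nat.card {c : Fin (3 + n) → R // prodEta c = E ∧ f ∘ c = d} = Nat.card (RingHom.ker f) ^ n := by
  have hunit (t : Fin n → R) (ht : f ∘ t = fun i => d (Fin.natAdd 3 i)) :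
      IsUnit ((E * (prodEta t).adjugate) 1 1) := by
    have hmap : f ((E * (prodEta t).adjugate) 1 1) = -d (Fin.castAdd n 1) := by
      rw [← prodEta_mul_adjugate_prodEta_natAdd_one_one, hd, ← ht, prodEta_comp,
        ← RingHom.map_adjugate, ← map_mul]
      rfl
    exact isUnit_of_map_unit f _ (hmap ▸ hu.neg)
  have htail (c : Fin (3 + n) → R) (hc : prodEta c = E) :
      f ∘ c = d ↔ f ∘ (fun i => c (Fin.natAdd 3 i)) = fun i => d (Fin.natAdd 3 i) := by
    refine ⟨fun h => by subst h; rfl, fun h => ?_⟩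
    refine (eq_of_prodEta_eq_of_isUnit ?_ (fun i => (congrFun h i).symm) hu).symm
    rw [prodEta_comp, hc, hd]
  rw [Nat.card_congr (Equiv.subtypeEquivRight fun c => and_congr_right (htail c)),
    card_prodEta_eq_and_of_isUnit hE _ hunit, card_comp_eq hf, Fintype.card_fin]

theorem card_lifts_of_isUnit (hf : Function.Surjective f) {ε : ℤˣ} {d : Fin (3 + n) → S}
    (hd : prodEta d = ε • 1) {i : Fin (3 + n)} (hu : IsUnit (d i)) :
    Nat.card {c : Fin (3 + n) → R // prodEta c = ε • 1 ∧ f ∘ c = d} =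
      Nat.card (RingHom.ker f) ^ n := by
  have : NeZero (3 + n) := ⟨by omega⟩
  rw [← card_lifts_comp_add_right f ε d (i - Fin.castAdd n 1)]
  refine card_lifts_of_isUnit_one hf (det_units_smul_one ε) ?_ ?_
  · rwa [mapMatrix_units_smul_one, prodEta_comp_add_right_eq_iff]
  · rwa [add_sub_cancel]

theorem solutionCount_eq_mul_card_ker_pow [Finite R] (hf : Function.Surjective f) {ε : ℤˣ}
    (hε : ∀ d : Fin (3 + n) → S, prodEta d = ε • 1 → ∃ i, IsUnit (d i)) :
    solutionCount R (3 + n) ε = solutionCount S (3 + n) ε * Nat.card (RingHom.ker f) ^ n := by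
  have : Finite S := Finite.of_surjective f hf
  have hmap (c : Fin (3 + n) → R) (hc : prodEta c = ε • 1) : prodEta (f ∘ c) = ε • 1 := by
    rw [prodEta_comp, hc, mapMatrix_units_smul_one]
  refine card_eq_card_mul_of_card_fiber_eq (Subtype.map (f ∘ ·) hmap) fun ⟨d, hd⟩ => ?_
  obtain ⟨i, hi⟩ := hε d hd
  rw [← card_lifts_of_isUnit hf hd hi]
  exact Nat.card_congr ((Equiv.subtypeEquivRight fun c => Subtype.ext_iff).trans
    (Equiv.subtypeSubtypeEquivSubtypeInter _ fun c => f ∘ c = d))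

theorem card_sq_sub_one_mul_solutionCount_of_isLocalHom {F : Type*} [Field F] [Finite R]
    {f : R →+* F} [IsLocalHom f] (hf : Function.Surjective f) (h2 : (2 : F) ≠ 0) (m : ℕ) :
    ((Nat.card F : ℤ) ^ 2 - 1) * solutionCount R (2 * m + 4) ((-1) ^ (m + 1)) =
      (Nat.card (RingHom.ker f) : ℤ) ^ (2 * m + 1) * ((Nat.card F : ℤ) ^ (m + 2) - 1) *
        ((Nat.card F : ℤ) ^ (m + 1) - 1) := by
  have : Finite F := Finite.of_surjective f hf
  have hlift : solutionCount R (2 * m + 4) ((-1) ^ (m + 1)) =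
      solutionCount F (2 * m + 4) ((-1) ^ (m + 1)) * Nat.card (RingHom.ker f) ^ (2 * m + 1) := by
    rw [show 2 * m + 4 = 3 + (2 * m + 1) by ring]
    refine solutionCount_eq_mul_card_ker_pow hf ?_
    rw [show 3 + (2 * m + 1) = 2 * (m + 2) by ring]
    intro d hd
    simp only [isUnit_iff_ne_zero]
    exact exists_ne_zero_of_prodEta_eq h2 (by simpa [pow_succ] using hd)
  have hF := card_sq_sub_one_mul_solutionCount h2 (m + 1)
  rw [show 2 * (m + 1) + 2 = 2 * m + 4 by ring] at hF
  rw [hlift]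
  push_cast
  linear_combination (Nat.card (RingHom.ker f) : ℤ) ^ (2 * m + 1) * hF

end Lifting

theorem stmt3_general {R F : Type*} [CommRing R] [Finite R] [Field F] (f : R →+* F)
    [IsLocalHom f] (hf : Function.Surjective f) (h2 : (2 : F) ≠ 0) (n : ℕ) (hn : 4 ≤ n)
    (hn4 : n % 4 = 0) :
    Nat.card {c : Fin n → R // prodEta c = -1} =
      Nat.card (RingHom.ker f) ^ (n - 3) * (Nat.card F ^ ((n - 2) / 2) - 1) *
        qInt (n / 4) (Nat.card F ^ 2) := by
  have : Finite F := Finite.of_surjective f hf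
  obtain ⟨k, rfl⟩ : ∃ k, n = 4 * k + 4 := ⟨n / 4 - 1, by omega⟩
  have hcount := card_sq_sub_one_mul_solutionCount_of_isLocalHom hf h2 (2 * k)
  have hq : 1 < (Nat.card F : ℤ) := mod_cast Finite.one_lt_card
  have hgeom : (qInt (k + 1) (Nat.card F ^ 2) : ℤ) * ((Nat.card F : ℤ) ^ 2 - 1) =
      (Nat.card F : ℤ) ^ (2 * k + 2) - 1 := by
    rw [qInt]
    push_cast
    rw [geom_sum_mul, ← pow_mul, mul_add_one]
  rw [(odd_two_mul_add_one k).neg_one_pow, ← hgeom, solutionCount,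
    show 2 * (2 * k) + 4 = 4 * k + 4 by ring, Units.neg_smul, one_smul] at hcount
  rw [show 4 * k + 4 - 3 = 2 * (2 * k) + 1 by omega, show (4 * k + 4 - 2) / 2 = 2 * k + 1 by omega,
    show (4 * k + 4) / 4 = k + 1 by omega]
  zify [Nat.one_le_pow (2 * k + 1) (Nat.card F) Nat.card_pos]
  refine mul_left_cancel₀ (a := (Nat.card F : ℤ) ^ 2 - 1) (by nlinarith) ?_
  linear_combination hcount

theorem isLocalHom_castHom_prime_pow {p r : ℕ} (hp : p.Prime) (hr : r ≠ 0) :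
    IsLocalHom (ZMod.castHom (dvd_pow_self p hr) (ZMod p)) := by
  have : Fact p.Prime := ⟨hp⟩
  refine ⟨fun x hx => ?_⟩
  obtain ⟨k, rfl⟩ := ZMod.natCast_zmod_surjective x
  rw [map_natCast, isUnit_iff_ne_zero, Ne, ZMod.natCast_eq_zero_iff] at hx
  exact (ZMod.isUnit_natCast_iff_not_dvd_pow hp hr.pos).2 hx

theorem card_ker_castHom_prime_pow {p r : ℕ} (hp : p.Prime) (hr : r ≠ 0) :
    Nat.card (RingHom.ker (ZMod.castHom (dvd_pow_self p hr) (ZMod p))) = p ^ (r - 1) := by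
  have : NeZero p := ⟨hp.ne_zero⟩
  have hcard := card_eq_card_mul_of_card_fiber_eq (ZMod.castHom (dvd_pow_self p hr) (ZMod p))
    (card_fiber_eq_card_ker (ZMod.castHom_surjective _))
  rw [Nat.card_zmod, Nat.card_zmod] at hcard
  exact Nat.eq_of_mul_eq_mul_left hp.pos (hcard.symm.trans (mul_pow_sub_one hr p).symm)

theorem two_ne_zero_zmod_of_two_lt {n : ℕ} (hn : 2 < n) : (2 : ZMod n) ≠ 0 := by
  exact_mod_cast (ZMod.natCast_eq_zero_iff 2 n).not.2 (Nat.not_dvd_of_pos_of_lt two_pos hn)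

/-- For `n ≥ 4` with `4 ∣ n` and `p > 2` prime, the number of tuples over
`ℤ/p^rℤ` with `[c₁, …, cₙ] = -Id` is `p^((n-3)(r-1)) · (p^((n-2)/2) - 1) · [n/4]_{p²}`. -/
theorem stmt3 (p r : ℕ) (hp : p.Prime) (hp2 : 2 < p) (hr : 1 ≤ r) (n : ℕ) (hn : 4 ≤ n)
    (hn4 : n % 4 = 0) :
    Nat.card {c : Fin n → ZMod (p ^ r) // prodEta c = -1} =
      p ^ ((n - 3) * (r - 1)) * (p ^ ((n - 2) / 2) - 1) * qInt (n / 4) (p ^ 2) := by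
  have := Fact.mk hp
  have hr0 : r ≠ 0 := Nat.ne_of_gt hr
  have := isLocalHom_castHom_prime_pow hp hr0
  rw [stmt3_general (ZMod.castHom (dvd_pow_self p hr0) (ZMod p)) (ZMod.castHom_surjective _)
    (two_ne_zero_zmod_of_two_lt hp2) n hn hn4, card_ker_castHom_prime_pow hp hr0, Nat.card_zmod,
    ← pow_mul']
end

section
/- Let R be a commutative ring and x, u, v, y ∈ R such that uv − 1 is a unit of R. Then [x, u, v, y] = [x + (1 − v)(uv − 1)⁻¹, uv − 1, y + (1 − u)(uv − 1)⁻¹]. Moreover, for all x, y ∈ R one has [x, 1, y] = [x − 1, y − 1]. -/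
open Matrix

/-!
Multiplying `η(a)` by a transvection on the appropriate side only shifts `a`:
`T(t) η(a) = η(a + t)` for the upper transvection `T(t)`, and `η(a) L(t) = η(a - t)` for the lower
one. Both identities therefore reduce to writing the middle of the product, `η(u) η(v)` or `η(1)`,
as `L(s) M T(t)`, where `M` is `η(uv - 1)` or the identity; the outer factors absorb `L(s)` and
`T(t)`.
-/

section

variable {R : Type*} [CommRing R]

theorem transvection_zero_one (t : R) : transvection (0 : Fin 2) 1 t = !![1, t; 0, 1] := by
  ext i j
  fin_cases i <;> fin_cases j <;> simp [transvection]

theorem transvection_one_zero (t : R) : transvection (1 : Fin 2) 0 t = !![1, 0; t, 1] := by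
  ext i j
  fin_cases i <;> fin_cases j <;> simp [transvection]

theorem transvection_mul_eta (t a : R) : transvection 0 1 t * eta a = eta (a + t) := by
  simp [transvection_zero_one, eta]

theorem eta_mul_transvection (a t : R) : eta a * transvection 1 0 t = eta (a - t) := by
  simp [transvection_one_zero, eta, sub_eq_add_neg]

theorem eta_one_eq_transvection_mul_transvection :
    eta (1 : R) = transvection 1 0 1 * transvection 0 1 (-1) := by
  simp [transvection_zero_one, transvection_one_zero, eta]

theorem eta_mul_eta (u v : R) : eta u * eta v = !![u * v - 1, -u; v, -1] := by
  simp [eta, sub_eq_add_neg]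

theorem transvection_mul_eta_mul_transvection (s a t : R) :
    transvection 1 0 s * eta a * transvection 0 1 t =
      !![a, a * t - 1; s * a + 1, (s * a + 1) * t - s] := by
  simp [transvection_zero_one, transvection_one_zero, eta, sub_eq_add_neg]

theorem eta_mul_eta_eq_transvection_mul_eta_mul_transvection {u v w : R}
    (hw : (u * v - 1) * w = 1) :
    eta u * eta v =
      transvection 1 0 (-((1 - v) * w)) * eta (u * v - 1) * transvection 0 1 ((1 - u) * w) := by
  have lower_left : -((1 - v) * w) * (u * v - 1) + 1 = v := by
    linear_combination (v - 1) * hw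
  have upper_right : (u * v - 1) * ((1 - u) * w) - 1 = -u := by
    linear_combination (1 - u) * hw
  have lower_right : v * ((1 - u) * w) - -((1 - v) * w) = -1 := by
    linear_combination -hw
  rw [eta_mul_eta, transvection_mul_eta_mul_transvection, lower_left, upper_right, lower_right]

theorem eta_mul_eta_mul_eta_mul_eta {u v w : R} (hw : (u * v - 1) * w = 1) (x y : R) :
    eta x * eta u * eta v * eta y =
      eta (x + (1 - v) * w) * eta (u * v - 1) * eta (y + (1 - u) * w) := by
  rw [mul_assoc (eta x), eta_mul_eta_eq_transvection_mul_eta_mul_transvection hw, ← mul_assoc,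
    ← mul_assoc, eta_mul_transvection, sub_neg_eq_add, mul_assoc _ (transvection _ _ _),
    transvection_mul_eta]

theorem eta_mul_eta_one_mul_eta (x y : R) :
    eta x * eta 1 * eta y = eta (x - 1) * eta (y - 1) := by
  rw [eta_one_eq_transvection_mul_transvection, ← mul_assoc, eta_mul_transvection, mul_assoc,
    transvection_mul_eta, ← sub_eq_add_neg]

theorem prodEta_vecEmpty : prodEta (![] : Fin 0 → R) = 1 := by
  simp [prodEta]

theorem prodEta_vecCons {n : ℕ} (a : R) (c : Fin n → R) :
    prodEta (vecCons a c) = eta a * prodEta c := by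
  simp [prodEta, List.ofFn_succ]

end

/-- If `uv - 1` is a unit, then
`[x, u, v, y] = [x + (1-v)(uv-1)⁻¹, uv-1, y + (1-u)(uv-1)⁻¹]`; moreover
`[x, 1, y] = [x-1, y-1]` for all `x, y`. -/
theorem stmt4 {R : Type*} [CommRing R] :
    (∀ x u v y : R, IsUnit (u * v - 1) →
      prodEta ![x, u, v, y] =
        prodEta ![x + (1 - v) * Ring.inverse (u * v - 1), u * v - 1,
          y + (1 - u) * Ring.inverse (u * v - 1)]) ∧
    (∀ x y : R, prodEta ![x, 1, y] = prodEta ![x - 1, y - 1]) := by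
  simp only [prodEta_vecCons, prodEta_vecEmpty, mul_one, ← mul_assoc]
  exact ⟨fun x _ _ y h => eta_mul_eta_mul_eta_mul_eta (Ring.mul_inverse_cancel _ h) x y,
    eta_mul_eta_one_mul_eta⟩
end

section
/- Let p be a prime, r ∈ ℕ_{≥1}, R = ℤ/p^rℤ with maximal ideal I = pR, and let a ∈ R be a non-unit. Set M := {(u, v) ∈ I × I : uv = a}. Then |M| = (r−1)p^r − (r−2)p^{r−1} if a = 0, and |M| = (p^r − p^{r−1})·(ν_p(a) − 1) if a ≠ 0. -/
open Matrix

open scoped Classical in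
/-- `ν_p(a)`: the largest `k ∈ {0, …, r}` with `a ≡ 0 (mod p^k)`; in particular `ν_p(0) = r`. -/
noncomputable def nuP (p r : ℕ) (a : ZMod (p ^ r)) : ℕ :=
  Nat.findGreatest (fun k => (p : ZMod (p ^ r)) ^ k ∣ a) r

/-!
Sort the pairs `(u, v)` by the associate class of `u`. In a local ring, if `d ≠ 0` divides `a`, then
the pairs with `uv = a` and `u` associated to `d` are equinumerous with the units: the units `x`
with `dx = u` and the solutions `v` of `uv = a` are both translates of the annihilator of `d`.
If the maximal ideal is generated by a nilpotent `π`, the nonzero classes are those of the powers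
`π ^ i`, and for `a` associated to `π ^ k` both factors are nonunits exactly when `1 ≤ i < k`.
This gives `(k - 1) * |Rˣ|` pairs with `u ≠ 0`; the pairs with `u = 0` occur only for `a = 0`, where
`v` is any nonunit.
-/

/-- The ordered pairs of nonunits with product `a`. -/
def nonunitFactorizations {R : Type*} [CommMonoid R] (a : R) : Set (R × R) :=
  {uv | ¬IsUnit uv.1 ∧ ¬IsUnit uv.2 ∧ uv.1 * uv.2 = a}

/-- The ordered pairs with product `a` whose first entry lies in the associate class of `d`; these
are the strata by which `nonunitFactorizations a` is counted. -/
def factorizationsAssociated {R : Type*} [CommMonoid R] (d a : R) : Set (R × R) :=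
  {uv | Associated d uv.1 ∧ uv.1 * uv.2 = a}

theorem finiteMultiplicity_of_isNilpotent {R : Type*} [CommMonoidWithZero R] {π a : R}
    (hnil : IsNilpotent π) (ha : a ≠ 0) : FiniteMultiplicity π a := by
  obtain ⟨n, hn⟩ := hnil
  refine ⟨n, fun hdvd => ha ?_⟩
  rwa [pow_succ, hn, zero_mul, zero_dvd_iff] at hdvd

theorem ncard_nonunitFactorizations_zero_sep_fst_eq_zero {R : Type*} [CommMonoidWithZero R]
    [Nontrivial R] :
    {uv ∈ nonunitFactorizations (0 : R) | uv.1 = 0}.ncard = (nonunits R).ncard := by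
  have himage : {uv ∈ nonunitFactorizations (0 : R) | uv.1 = 0} =
      (nonunits R).image (Prod.mk 0) := by
    ext ⟨u, v⟩
    simp only [nonunitFactorizations, Set.mem_ofPred_eq, Set.mem_image, mem_nonunits_iff,
      Prod.mk.injEq]
    constructor
    · rintro ⟨⟨-, hv, -⟩, rfl⟩
      exact ⟨v, hv, rfl, rfl⟩
    · rintro ⟨v, hv, rfl, rfl⟩
      exact ⟨⟨not_isUnit_zero, hv, zero_mul v⟩, rfl⟩
  rw [himage, Set.ncard_image_of_injective _ (Prod.mk_right_injective 0)]

theorem natCard_units_add_ncard_nonunits (R : Type*) [Monoid R] [Finite R] :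
    Nat.card Rˣ + (nonunits R).ncard = Nat.card R := by
  have hunits : Set.range (Units.val : Rˣ → R) = (nonunits R)ᶜ := by
    ext x
    simp [IsUnit, nonunits]
  rw [← Nat.card_range_of_injective (Units.val_injective (α := R)), Nat.card_coe_set_eq, hunits,
    add_comm, Set.ncard_add_ncard_compl]

section LocalRing

variable {R : Type*} [CommRing R] [IsLocalRing R]

theorem isUnit_add_of_mul_eq_zero {x y z : R} (hx : IsUnit x) (hz : z ≠ 0) (hzy : z * y = 0) :
    IsUnit (x + y) := by
  have hy : ¬IsUnit y := fun hy => hz (hy.mul_left_eq_zero.mp hzy)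
  by_contra hxy
  have hsub := IsLocalRing.nonunits_add hxy (a := x + y) (b := -y) (by simpa using hy)
  exact hsub (by simpa using hx)

theorem ncard_factorizationsAssociated {d a : R} (hd : d ≠ 0) (hda : d ∣ a) :
    (factorizationsAssociated d a).ncard = Nat.card Rˣ := by
  obtain ⟨b, rfl⟩ := hda
  choose! s hs using fun (u : R) (hu : Associated d u) => hu
  -- The solutions of `u * v = d * b` differ from `(s u)⁻¹ * b`, and the units `x` with `d * x = u`
  -- differ from `s u`, by annihilators of `d`.
  let f : Rˣ → R × R := fun x => (d * x, ↑(s (d * x))⁻¹ * b + (x - s (d * x)))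
  have hf : Function.Injective f := by
    intro x y hxy
    obtain ⟨hfst, hsnd⟩ := Prod.mk.inj hxy
    rw [hfst] at hsnd
    exact Units.ext (by linear_combination hsnd)
  have hrange : Set.range f = factorizationsAssociated d (d * b) := by
    ext ⟨u, v⟩
    constructor
    · rintro ⟨x, hx⟩
      obtain ⟨rfl, rfl⟩ := Prod.mk.inj hx
      have hdx : Associated d (d * x) := ⟨x, rfl⟩
      refine ⟨hdx, ?_⟩
      linear_combination (-x - b * ↑(s (d * x))⁻¹) * hs _ hdx + d * b * (s (d * x)).mul_inv
    · rintro ⟨hu, huv⟩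
      have hann : d * (v - ↑(s u)⁻¹ * b) = 0 := by
        linear_combination ↑(s u)⁻¹ * huv + ↑(s u)⁻¹ * v * hs u hu - d * v * (s u).inv_mul
      obtain ⟨x, hx⟩ := isUnit_add_of_mul_eq_zero (s u).isUnit hd hann
      have hdx : d * x = u := by linear_combination d * hx + hann + hs u hu
      exact ⟨x, Prod.ext hdx (by simp only [f, hdx]; linear_combination hx)⟩
  rw [← hrange, ← Nat.card_coe_set_eq, Nat.card_range_of_injective hf]

theorem not_pow_succ_dvd_of_associated_pow {π u : R} {i : ℕ} (hπ : ¬IsUnit π)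
    (hi : π ^ i ≠ 0) (hu : Associated (π ^ i) u) : ¬π ^ (i + 1) ∣ u := by
  rw [← hu.dvd_iff_dvd_right]
  rintro ⟨c, hc⟩
  have hunit : IsUnit (1 - π * c) :=
    IsLocalRing.isUnit_one_sub_self_of_mem_nonunits _ fun h => hπ (isUnit_of_mul_isUnit_left h)
  exact hi (hunit.mul_left_eq_zero.mp (by linear_combination hc))

theorem pairwise_disjoint_factorizationsAssociated_pow {π : R} (hπ : ¬IsUnit π) (a : R) {k : ℕ}
    (hpow : ∀ i < k, π ^ i ≠ 0) :
    (Set.Ico 1 k).PairwiseDisjoint fun i => factorizationsAssociated (π ^ i) a := by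
  intro i hi j hj hij
  refine Set.disjoint_left.mpr fun uv hui huj => hij ?_
  have multiplicity_eq : ∀ n < k, Associated (π ^ n) uv.1 → multiplicity π uv.1 = n :=
    fun n hn hu => multiplicity_eq_of_dvd_of_not_dvd hu.dvd
      (not_pow_succ_dvd_of_associated_pow hπ (hpow n hn) hu)
  exact (multiplicity_eq i hi.2 hui.1).symm.trans (multiplicity_eq j hj.2 huj.1)

theorem dvd_iff_not_isUnit_of_maximalIdeal_eq_span {π : R}
    (hπ : IsLocalRing.maximalIdeal R = Ideal.span {π}) {x : R} : π ∣ x ↔ ¬IsUnit x := by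
  rw [← Ideal.mem_span_singleton, ← hπ, IsLocalRing.mem_maximalIdeal, mem_nonunits_iff]

theorem isNilpotent_of_maximalIdeal_eq_span [IsArtinianRing R] {π : R}
    (hπ : IsLocalRing.maximalIdeal R = Ideal.span {π}) : IsNilpotent π := by
  obtain ⟨n, hn⟩ := IsArtinianRing.isNilpotent_jacobson_bot (R := R)
  rw [IsLocalRing.jacobson_eq_maximalIdeal ⊥ bot_ne_top, hπ, Ideal.span_singleton_pow] at hn
  exact ⟨n, Ideal.span_singleton_eq_bot.mp hn⟩

theorem associated_pow_multiplicity {π : R} (hπ : IsLocalRing.maximalIdeal R = Ideal.span {π})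
    (hnil : IsNilpotent π) {a : R} (ha : a ≠ 0) : Associated (π ^ multiplicity π a) a := by
  obtain ⟨c, hac, hc⟩ :=
    (finiteMultiplicity_of_isNilpotent hnil ha).exists_eq_pow_mul_and_not_dvd
  have hunit : IsUnit c := by
    rwa [dvd_iff_not_isUnit_of_maximalIdeal_eq_span hπ, not_not] at hc
  exact ⟨hunit.unit, hac.symm⟩

theorem nonunitFactorizations_sep_fst_ne_zero_eq_biUnion {π : R}
    (hπ : IsLocalRing.maximalIdeal R = Ideal.span {π}) (hnil : IsNilpotent π) {a : R} {k : ℕ}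
    (ha : Associated (π ^ k) a) (hpow : ∀ i < k, π ^ i ≠ 0) :
    {uv ∈ nonunitFactorizations a | uv.1 ≠ 0} =
      ⋃ i ∈ Set.Ico 1 k, factorizationsAssociated (π ^ i) a := by
  have hdvd {x : R} : π ∣ x ↔ ¬IsUnit x := dvd_iff_not_isUnit_of_maximalIdeal_eq_span hπ
  have hπ_unit : ¬IsUnit π := hdvd.mp dvd_rfl
  ext ⟨u, v⟩
  simp only [nonunitFactorizations, factorizationsAssociated, Set.mem_ofPred_eq, Set.mem_iUnion,
    exists_prop, Set.mem_Ico]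
  constructor
  · rintro ⟨⟨hu, hv, huv⟩, hu0⟩
    have hui := associated_pow_multiplicity hπ hnil hu0
    set i := multiplicity π u
    refine ⟨i, ⟨?_, ?_⟩, hui, huv⟩
    · by_contra! hi
      exact hu (hui.isUnit (by simp [Nat.lt_one_iff.mp hi]))
    · by_contra! hki
      have hi0 : π ^ i ≠ 0 := fun h => hu0 (hui.eq_zero_iff.mp h)
      have hk0 : π ^ k ≠ 0 := fun h => hi0 (pow_eq_zero_of_le hki h)
      have hia : π ^ (i + 1) ∣ a := by
        rw [← huv, pow_succ]
        exact mul_dvd_mul hui.dvd (hdvd.mpr hv)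
      exact not_pow_succ_dvd_of_associated_pow hπ_unit hk0 ha
        ((pow_dvd_pow π (by lia)).trans hia)
  · rintro ⟨i, ⟨hi1, hik⟩, hui, huv⟩
    have hnot := not_pow_succ_dvd_of_associated_pow hπ_unit (hpow i hik) hui
    refine ⟨⟨hdvd.mp ((dvd_pow_self π (by lia)).trans hui.dvd), fun hv => hnot ?_, huv⟩,
      fun h => hpow i hik (hui.eq_zero_iff.mpr h)⟩
    have hau : a ∣ u := (huv ▸ associated_mul_unit_left u v hv).dvd
    exact (pow_dvd_pow π hik).trans (ha.dvd.trans hau)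

theorem ncard_nonunitFactorizations_sep_fst_ne_zero [Finite R] {π : R}
    (hπ : IsLocalRing.maximalIdeal R = Ideal.span {π}) {a : R} {k : ℕ}
    (ha : Associated (π ^ k) a) (hpow : ∀ i < k, π ^ i ≠ 0) :
    {uv ∈ nonunitFactorizations a | uv.1 ≠ 0}.ncard = (k - 1) * Nat.card Rˣ := by
  have hπ_unit : ¬IsUnit π := (dvd_iff_not_isUnit_of_maximalIdeal_eq_span hπ).mp dvd_rfl
  have hstratum : ∀ i ∈ Finset.Ico 1 k,
      (factorizationsAssociated (π ^ i) a).ncard = Nat.card Rˣ := fun i hi =>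
    have hik := (Finset.mem_Ico.mp hi).2
    ncard_factorizationsAssociated (hpow i hik) ((pow_dvd_pow π hik.le).trans ha.dvd)
  have hnil : IsNilpotent π := isNilpotent_of_maximalIdeal_eq_span hπ
  rw [nonunitFactorizations_sep_fst_ne_zero_eq_biUnion hπ hnil ha hpow,
    (Set.finite_Ico 1 k).ncard_biUnion (fun _ _ => Set.toFinite _)
      (pairwise_disjoint_factorizationsAssociated_pow hπ_unit a hpow),
    ← Finset.coe_Ico, finsum_mem_coe_finset, Finset.sum_congr rfl hstratum, Finset.sum_const,
    Nat.card_Ico, smul_eq_mul]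

theorem ncard_nonunitFactorizations_of_ne_zero [Finite R] {π : R}
    (hπ : IsLocalRing.maximalIdeal R = Ideal.span {π}) {a : R} (ha : a ≠ 0) :
    (nonunitFactorizations a).ncard = (multiplicity π a - 1) * Nat.card Rˣ := by
  have hassoc := associated_pow_multiplicity hπ (isNilpotent_of_maximalIdeal_eq_span hπ) ha
  have hpow : ∀ i < multiplicity π a, π ^ i ≠ 0 := fun i hi h =>
    ha (hassoc.eq_zero_iff.mp (pow_eq_zero_of_le hi.le h))
  have hne : {uv ∈ nonunitFactorizations a | uv.1 ≠ 0} = nonunitFactorizations a :=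
    Set.sep_eq_self_iff_mem_true.mpr fun uv huv => left_ne_zero_of_mul (huv.2.2 ▸ ha)
  rw [← hne, ncard_nonunitFactorizations_sep_fst_ne_zero hπ hassoc hpow]

theorem ncard_nonunitFactorizations_zero [Finite R] {π : R}
    (hπ : IsLocalRing.maximalIdeal R = Ideal.span {π}) :
    (nonunitFactorizations (0 : R)).ncard =
      (nilpotencyClass π - 1) * Nat.card Rˣ + (nonunits R).ncard := by
  have hnil : IsNilpotent π := isNilpotent_of_maximalIdeal_eq_span hπ
  have hassoc : Associated (π ^ nilpotencyClass π) 0 := by rw [pow_nilpotencyClass hnil]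
  have hpow : ∀ i < nilpotencyClass π, π ^ i ≠ 0 := fun i hi h =>
    pow_pred_nilpotencyClass hnil (pow_eq_zero_of_le (by lia) h)
  rw [← ncard_nonunitFactorizations_sep_fst_ne_zero hπ hassoc hpow,
    ← ncard_nonunitFactorizations_zero_sep_fst_eq_zero, add_comm]
  exact (Set.ncard_inter_add_ncard_sdiff_eq_ncard _ {uv : R × R | uv.1 = 0}).symm

theorem stmt9_general [Finite R] {π : R} (hπ : IsLocalRing.maximalIdeal R = Ideal.span {π})
    {a : R} (ha : ¬IsUnit a) :
    (a = 0 →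
      (Nat.card {uv : R × R //
          uv.1 ∈ Ideal.span {π} ∧ uv.2 ∈ Ideal.span {π} ∧ uv.1 * uv.2 = a} : ℤ) =
        (Nat.card Rˣ : ℤ) * ((nilpotencyClass π : ℤ) - 1) + ((nonunits R).ncard : ℤ)) ∧
    (a ≠ 0 →
      (Nat.card {uv : R × R //
          uv.1 ∈ Ideal.span {π} ∧ uv.2 ∈ Ideal.span {π} ∧ uv.1 * uv.2 = a} : ℤ) =
        (Nat.card Rˣ : ℤ) * ((multiplicity π a : ℤ) - 1)) := by
  have hnil : IsNilpotent π := isNilpotent_of_maximalIdeal_eq_span hπ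
  have hcard : Nat.card {uv : R × R //
      uv.1 ∈ Ideal.span {π} ∧ uv.2 ∈ Ideal.span {π} ∧ uv.1 * uv.2 = a} =
        (nonunitFactorizations a).ncard := by
    simp only [Ideal.mem_span_singleton, dvd_iff_not_isUnit_of_maximalIdeal_eq_span hπ]
    rfl
  rw [hcard]
  constructor
  · rintro rfl
    have hclass : 1 ≤ nilpotencyClass π := pos_nilpotencyClass_iff.mpr hnil
    rw [ncard_nonunitFactorizations_zero hπ]
    push_cast [hclass]
    ring
  · intro ha0
    have hmult : 1 ≤ multiplicity π a :=
      (finiteMultiplicity_of_isNilpotent hnil ha0).le_multiplicity_of_pow_dvd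
        ((pow_one π).symm ▸ (dvd_iff_not_isUnit_of_maximalIdeal_eq_span hπ).mpr ha)
    rw [ncard_nonunitFactorizations_of_ne_zero hπ ha0]
    push_cast [hmult]
    ring

end LocalRing

section ZModPrimePow

theorem natCast_pow_self_eq_zero (n r : ℕ) : (n : ZMod (n ^ r)) ^ r = 0 := by
  rw [← Nat.cast_pow, ZMod.natCast_self]

theorem nilpotencyClass_natCast_zmod_pow {n : ℕ} (hn : 1 < n) (r : ℕ) :
    nilpotencyClass (n : ZMod (n ^ r)) = r := by
  have hpow (k : ℕ) : (n : ZMod (n ^ r)) ^ k = 0 ↔ r ≤ k := by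
    rw [← Nat.cast_pow, ZMod.natCast_eq_zero_iff, Nat.pow_dvd_pow_iff_le_right hn]
  simp only [nilpotencyClass, hpow]
  exact csInf_Ici

theorem nuP_eq_multiplicity {n r : ℕ} {a : ZMod (n ^ r)} (ha : a ≠ 0) :
    nuP n r a = multiplicity (n : ZMod (n ^ r)) a := by
  have hfin : FiniteMultiplicity (n : ZMod (n ^ r)) a :=
    finiteMultiplicity_of_isNilpotent ⟨r, natCast_pow_self_eq_zero n r⟩ ha
  have hle : multiplicity (n : ZMod (n ^ r)) a ≤ r := by
    by_contra! hlt
    have hdvd := hfin.pow_dvd_iff_le_multiplicity.mpr hlt.le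
    rw [natCast_pow_self_eq_zero, zero_dvd_iff] at hdvd
    exact ha hdvd
  classical
  exact Nat.findGreatest_eq_iff.mpr ⟨hle, fun _ => pow_multiplicity_dvd _ _,
    fun _ hlt _ => hfin.not_pow_dvd_of_multiplicity_lt hlt⟩

variable {p r : ℕ} [Fact p.Prime] [NeZero r]

theorem natCast_prime_dvd_iff_not_isUnit {x : ZMod (p ^ r)} :
    (p : ZMod (p ^ r)) ∣ x ↔ ¬IsUnit x := by
  have hr : 0 < r := NeZero.pos r
  have isUnit_iff (n : ℕ) : IsUnit (n : ZMod (p ^ r)) ↔ ¬p ∣ n := by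
    rw [ZMod.isUnit_iff_coprime, Nat.coprime_pow_right_iff hr, Nat.coprime_comm,
      (Fact.out : p.Prime).coprime_iff_not_dvd]
  constructor
  · exact fun hpx hx => (isUnit_iff p).mp (isUnit_of_dvd_unit hpx hx) dvd_rfl
  · obtain ⟨n, rfl⟩ := ZMod.natCast_zmod_surjective x
    rw [isUnit_iff, not_not]
    exact Nat.cast_dvd_cast

instance isLocalRing_zmod_prime_pow_s9 : IsLocalRing (ZMod (p ^ r)) := by
  have : Fact (1 < p ^ r) := ⟨Nat.one_lt_pow (NeZero.ne r) (Fact.out : p.Prime).one_lt⟩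
  refine IsLocalRing.of_nonunits_add fun x y hx hy => ?_
  rw [mem_nonunits_iff, ← natCast_prime_dvd_iff_not_isUnit] at *
  exact dvd_add hx hy

theorem maximalIdeal_zmod_prime_pow :
    IsLocalRing.maximalIdeal (ZMod (p ^ r)) = Ideal.span {(p : ZMod (p ^ r))} := by
  ext x
  rw [IsLocalRing.mem_maximalIdeal, mem_nonunits_iff, Ideal.mem_span_singleton,
    natCast_prime_dvd_iff_not_isUnit]

theorem natCard_units_zmod_prime_pow :
    (Nat.card (ZMod (p ^ r))ˣ : ℤ) = (p : ℤ) ^ r - (p : ℤ) ^ (r - 1) := by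
  have hp : p.Prime := Fact.out
  rw [Nat.card_eq_fintype_card, ZMod.card_units_eq_totient,
    Nat.totient_prime_pow hp (NeZero.pos r)]
  push_cast [hp.one_le]
  rw [mul_sub_one, pow_sub_one_mul (NeZero.ne r)]

theorem ncard_nonunits_zmod_prime_pow :
    ((nonunits (ZMod (p ^ r))).ncard : ℤ) = (p : ℤ) ^ (r - 1) := by
  have hsum := congrArg (Nat.cast : ℕ → ℤ) (natCard_units_add_ncard_nonunits (ZMod (p ^ r)))
  rw [Nat.cast_add, natCard_units_zmod_prime_pow, Nat.card_zmod, Nat.cast_pow] at hsum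
  linear_combination hsum

end ZModPrimePow

/-- For `R = ℤ/p^rℤ`, `I = pR`, and a non-unit `a ∈ R`, the number of pairs
`(u,v) ∈ I × I` with `uv = a` is `(r-1)p^r - (r-2)p^(r-1)` if `a = 0`, and
`(p^r - p^(r-1))·(ν_p(a) - 1)` otherwise. -/
theorem stmt9 (p r : ℕ) (hp : p.Prime) (hr : 1 ≤ r) (a : ZMod (p ^ r)) (ha : ¬ IsUnit a) :
    (a = 0 →
      (Nat.card {uv : ZMod (p ^ r) × ZMod (p ^ r) //
          uv.1 ∈ Ideal.span {(p : ZMod (p ^ r))} ∧ uv.2 ∈ Ideal.span {(p : ZMod (p ^ r))} ∧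
          uv.1 * uv.2 = a} : ℤ) =
        ((r : ℤ) - 1) * (p : ℤ) ^ r - ((r : ℤ) - 2) * (p : ℤ) ^ (r - 1)) ∧
    (a ≠ 0 →
      (Nat.card {uv : ZMod (p ^ r) × ZMod (p ^ r) //
          uv.1 ∈ Ideal.span {(p : ZMod (p ^ r))} ∧ uv.2 ∈ Ideal.span {(p : ZMod (p ^ r))} ∧
          uv.1 * uv.2 = a} : ℤ) =
        ((p : ℤ) ^ r - (p : ℤ) ^ (r - 1)) * ((nuP p r a : ℤ) - 1)) := by
  have : Fact p.Prime := ⟨hp⟩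
  have : NeZero r := ⟨by lia⟩
  obtain ⟨h_zero, h_ne_zero⟩ := stmt9_general maximalIdeal_zmod_prime_pow ha
  constructor
  · intro ha0
    rw [h_zero ha0, natCard_units_zmod_prime_pow, ncard_nonunits_zmod_prime_pow,
      nilpotencyClass_natCast_zmod_pow hp.one_lt]
    ring
  · intro ha0
    rw [h_ne_zero ha0, natCard_units_zmod_prime_pow, nuP_eq_multiplicity ha0]
end
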